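/- Let C = G⁰ ⋯ G^{m-1} be an n-qubit quantum circuit whose gates are drawn from {H_j, S_j, T_j, CX_{j,k}} (H, S, T acting on qubit j; CX with control j and target k), let Q̄ ⊆ {0,…,n-1} with q = |Q̄|, and let Π = ⊗_{i<n} Π_i be the 2^n × 2^n projector with Π_i = [[1,0],[0,0]] for i ∈ Q̄ and Π_i = I otherwise. Let F be the propositional formula F_init ∧ ⋀_{t∈[m]} F_{G^t} ∧ F_M over the variables {x_j^t, z_j^t, r^t : j ∈ [n], 0 ≤ t ≤ m} ∪ {u_t : t a T-gate step} defined in the context, and let W assign W(r^m) = -1, W(¬r^m) = 1, W(u_t) = 1/√2, W(¬u_t) = 1, and weight 1 to all other literals. Then (1/2^q) · MC_W(F) = ⟨0|^{⊗n} C† Π C |0⟩^{⊗n}, i.e., the weighted model count of F divided by 2^q equals the probability of observing outcome all-zeros when measuring the qubits in Q̄ in the computational basis after running C on the all-zeros state. -/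

import Mathlib

open Matrix

namespace QCMC

/-- A gate of an `n`-qubit Clifford+T circuit: `H`, `S`, `T` acting on qubit `j`,
or `CX` with control `j` and target `k`. -/
inductive Gate (n : ℕ) where
  | H (j : Fin n)
  | S (j : Fin n)
  | T (j : Fin n)
  | CX (j k : Fin n) (hjk : j ≠ k)

/-- Whether a gate is a `T` gate. -/
def isT {n : ℕ} : Gate n → Bool
  | .T _ => true
  | _ => false

/-- The Hadamard gate. -/
noncomputable def Hmat : Matrix (Fin 2) (Fin 2) ℂ :=
  ((Real.sqrt 2 : ℂ))⁻¹ • !![1, 1; 1, -1]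

/-- The phase gate. -/
noncomputable def Smat : Matrix (Fin 2) (Fin 2) ℂ := !![1, 0; 0, Complex.I]

/-- The T gate. -/
noncomputable def Tmat : Matrix (Fin 2) (Fin 2) ℂ :=
  !![1, 0; 0, Complex.exp (Complex.I * Real.pi / 4)]

/-- The projector `|0⟩⟨0| = [[1,0],[0,0]]`. -/
noncomputable def Proj0 : Matrix (Fin 2) (Fin 2) ℂ := !![1, 0; 0, 0]

/-- Kronecker product `⊗_{i<n} M i` on the function-indexed space `ℂ^{(Fin 2)^n}`. -/
noncomputable def tensorFin {n : ℕ} (M : Fin n → Matrix (Fin 2) (Fin 2) ℂ) :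
    Matrix (Fin n → Fin 2) (Fin n → Fin 2) ℂ :=
  Matrix.of fun a b => ∏ i, M i (a i) (b i)

/-- A single-qubit gate `U` on qubit `j`, extended to the `2^n`-dimensional space
by tensoring with identities. -/
noncomputable def singleQubit {n : ℕ} (j : Fin n) (U : Matrix (Fin 2) (Fin 2) ℂ) :
    Matrix (Fin n → Fin 2) (Fin n → Fin 2) ℂ :=
  tensorFin fun i => if i = j then U else 1

/-- The `CX` gate with control `j` and target `k` on the `2^n`-dimensional space:
`CX |…c…t…⟩ = |…c…(t⊕c)…⟩`. -/
noncomputable def cxMat {n : ℕ} (j k : Fin n) :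
    Matrix (Fin n → Fin 2) (Fin n → Fin 2) ℂ :=
  Matrix.of fun a b =>
    if a j = b j ∧ a k = b k + b j ∧ ∀ i, i ≠ j → i ≠ k → a i = b i then 1 else 0

/-- The unitary matrix of a gate. -/
noncomputable def gateMatrix {n : ℕ} : Gate n → Matrix (Fin n → Fin 2) (Fin n → Fin 2) ℂ
  | .H j => singleQubit j Hmat
  | .S j => singleQubit j Smat
  | .T j => singleQubit j Tmat
  | .CX j k _ => cxMat j k

/-- The unitary of the circuit `C = G^{m-1} ⋯ G^0`. -/
noncomputable def circuitMatrix {n m : ℕ} (gates : Fin m → Gate n) :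
    Matrix (Fin n → Fin 2) (Fin n → Fin 2) ℂ :=
  ((List.ofFn fun t : Fin m => gateMatrix (gates t)).reverse).prod

/-- The projector `Π = ⊗_{i<n} Π_i` with `Π_i = |0⟩⟨0|` for measured qubits
`i ∈ Q̄` and `Π_i = I` otherwise. -/
noncomputable def measProj {n : ℕ} (Qbar : Finset (Fin n)) :
    Matrix (Fin n → Fin 2) (Fin n → Fin 2) ℂ :=
  tensorFin fun i => if i ∈ Qbar then Proj0 else 1

/-- An assignment to the Boolean variables of the encoding:
`x_j^t`, `z_j^t`, `r^t` for `j ∈ [n]`, `0 ≤ t ≤ m`, and `u_t` for T-gate steps `t`. -/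
structure Assign (n m : ℕ) (gates : Fin m → Gate n) where
  x : Fin n → Fin (m + 1) → Bool
  z : Fin n → Fin (m + 1) → Bool
  r : Fin (m + 1) → Bool
  u : {t : Fin m // isT (gates t) = true} → Bool
  deriving Fintype, DecidableEq

/-- The initial-state constraint `F_init = ¬r⁰ ∧ ⋀_j ¬x_j⁰`. -/
def Finit {n m : ℕ} {gates : Fin m → Gate n} (α : Assign n m gates) : Prop :=
  α.r 0 = false ∧ ∀ j, α.x j 0 = false

/-- The gate constraint `F_{G^t}` relating the variables at steps `t` and `t+1`. -/
def FGate {n m : ℕ} (gates : Fin m → Gate n) (α : Assign n m gates) (t : Fin m) : Prop :=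
  match h : gates t with
  | .H j =>
      α.x j t.succ = α.z j t.castSucc ∧
      α.z j t.succ = α.x j t.castSucc ∧
      α.r t.succ = xor (α.r t.castSucc) (α.x j t.castSucc && α.z j t.castSucc) ∧
      ∀ i, i ≠ j → α.x i t.succ = α.x i t.castSucc ∧ α.z i t.succ = α.z i t.castSucc
  | .S j =>
      α.x j t.succ = α.x j t.castSucc ∧
      α.z j t.succ = xor (α.x j t.castSucc) (α.z j t.castSucc) ∧
      α.r t.succ = xor (α.r t.castSucc) (α.x j t.castSucc && α.z j t.castSucc) ∧
      ∀ i, i ≠ j → α.x i t.succ = α.x i t.castSucc ∧ α.z i t.succ = α.z i t.castSucc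
  | .CX j k _ =>
      α.x j t.succ = α.x j t.castSucc ∧
      α.z k t.succ = α.z k t.castSucc ∧
      α.x k t.succ = xor (α.x k t.castSucc) (α.x j t.castSucc) ∧
      α.z j t.succ = xor (α.z j t.castSucc) (α.z k t.castSucc) ∧
      α.r t.succ = xor (α.r t.castSucc)
        (α.x j t.castSucc && α.z k t.castSucc &&
          xor (α.x k t.castSucc) (!(α.z j t.castSucc))) ∧
      ∀ i, i ≠ j → i ≠ k →
        α.x i t.succ = α.x i t.castSucc ∧ α.z i t.succ = α.z i t.castSucc
  | .T j =>
      α.x j t.succ = α.x j t.castSucc ∧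
      (α.x j t.castSucc = true ∨ α.z j t.succ = α.z j t.castSucc) ∧
      α.r t.succ = xor (α.r t.castSucc)
        (α.x j t.castSucc && α.z j t.castSucc && !(α.z j t.succ)) ∧
      α.u ⟨t, by rw [h]; rfl⟩ = α.x j t.castSucc ∧
      ∀ i, i ≠ j → α.x i t.succ = α.x i t.castSucc ∧ α.z i t.succ = α.z i t.castSucc

/-- The measurement constraint `F_M = ⋀_j ¬x_j^m ∧ ⋀_{j ∉ Q̄} ¬z_j^m`. -/
def Fmeas {n m : ℕ} {gates : Fin m → Gate n} (Qbar : Finset (Fin n))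
    (α : Assign n m gates) : Prop :=
  (∀ j, α.x j (Fin.last m) = false) ∧ ∀ j ∉ Qbar, α.z j (Fin.last m) = false

/-- The full formula `F = F_init ∧ ⋀_{t∈[m]} F_{G^t} ∧ F_M`. -/
def Formula {n m : ℕ} (gates : Fin m → Gate n) (Qbar : Finset (Fin n))
    (α : Assign n m gates) : Prop :=
  Finit α ∧ (∀ t : Fin m, FGate gates α t) ∧ Fmeas Qbar α

/-- The weight of an assignment: `W(r^m) = -1`, `W(¬r^m) = 1`,
`W(u_t) = 1/√2`, `W(¬u_t) = 1`, and all other literals have weight `1`. -/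
noncomputable def weight {n m : ℕ} {gates : Fin m → Gate n} (α : Assign n m gates) : ℝ :=
  (if α.r (Fin.last m) then -1 else 1) *
    ∏ tu : {t : Fin m // isT (gates t) = true}, if α.u tu then (Real.sqrt 2)⁻¹ else 1

open Classical in
/-- The weighted model count `MC_W(F) = Σ_{α ⊨ F} W(α)`. -/
noncomputable def MC {n m : ℕ} (gates : Fin m → Gate n) (Qbar : Finset (Fin n)) : ℝ :=
  ∑ α : Assign n m gates, if Formula gates Qbar α then weight α else 0

/-!
Conjugating a Pauli string by `H`, `S` or `CX` gives a Pauli string up to sign, and conjugating by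
`T` fixes `I` and `Z` but sends `X` to `(Y + X) / √2` and `Y` to `(Y - X) / √2`. Hence, starting
from `|0…0⟩⟨0…0| = 2⁻ⁿ ∑ (strings in I and Z)`, the matrix `C |0…0⟩⟨0…0| C†` is `2⁻ⁿ` times a sum
over paths of signed Pauli strings through the circuit, where a path is weighted by one factor
`1 / √2` for each splitting `T` gate. The variables `x_j^t, z_j^t, r^t` spell out such a path, the
formula forces `u_t` to mark the splittings, and the trace against `Π` kills the strings excluded
by `F_M` and multiplies the others by `± 2^(n - q)`.
-/

section PathSum

variable {R M σ : Type*} [CommSemiring R] [AddCommMonoid M] [Module R M] [Fintype σ]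

theorem ofFn_reverse_prod_sum_smul {m : ℕ} (f : Fin m → Module.End R M) (K : Fin m → σ → σ → R)
    (v : σ → M) (h : ∀ t s, f t (v s) = ∑ s', K t s s' • v s') (a : σ → R) :
    (List.ofFn f).reverse.prod (∑ s, a s • v s) =
      ∑ P : Fin (m + 1) → σ,
        (a (P 0) * ∏ t, K t (P t.castSucc) (P t.succ)) • v (P (Fin.last m)) := by
  induction m generalizing a with
  | zero =>
    simpa using (Fintype.sum_equiv (Equiv.funUnique (Fin 1) σ) (fun P => a (P 0) • v (P 0))
      (fun s => a s • v s) fun _ => rfl).symm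
  | succ m ih =>
    have h₀ : f 0 (∑ s, a s • v s) = ∑ s', (∑ s, a s * K 0 s s') • v s' := by
      simp only [map_sum, map_smul, h, Finset.smul_sum, Finset.sum_smul, smul_smul]
      exact Finset.sum_comm
    rw [List.ofFn_succ, List.reverse_cons, List.prod_append, List.prod_singleton,
      Module.End.mul_apply, h₀, ih _ _ fun t => h t.succ,
      ← Equiv.sum_comp (Fin.consEquiv fun _ : Fin (m + 2) => σ), Fintype.sum_prod_type,
      Finset.sum_comm]
    refine Finset.sum_congr rfl fun P _ => ?_
    simp only [Finset.sum_mul, Finset.sum_smul, Fin.prod_univ_succ, Fin.consEquiv_apply, mul_assoc]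
    rfl

end PathSum

section Conjugation

variable {ι : Type*} [Fintype ι] [DecidableEq ι]

/-- Conjugation `X ↦ U X U†`, the action of a circuit on observables and density matrices, as a
representation of the multiplicative monoid of matrices. The scalars are restricted to `ℝ`, where
all coefficients of the encoding lie. -/
noncomputable def conj : Matrix ι ι ℂ →* Module.End ℝ (Matrix ι ι ℂ) where
  toFun U := LinearMap.mulLeftRight ℝ (U, Uᴴ)
  map_one' := by ext1; simp
  map_mul' U V := by ext1; simp [Matrix.mul_assoc]

theorem conj_apply (U X : Matrix ι ι ℂ) : conj U X = U * X * Uᴴ := rfl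

theorem conjTranspose_mul_mul_apply_self (C P : Matrix ι ι ℂ) (a : ι) :
    (Cᴴ * P * C) a a = (P * conj C (single a a 1)).trace := by
  rw [conj_apply, ← Matrix.mul_assoc, trace_mul_comm, ← Matrix.mul_assoc, ← Matrix.mul_assoc,
    trace_mul_single, MulOpposite.op_one, one_smul]

end Conjugation

section Tensor

variable {n : ℕ}

theorem tensorFin_mul (M N : Fin n → Matrix (Fin 2) (Fin 2) ℂ) :
    tensorFin M * tensorFin N = tensorFin fun i => M i * N i := by
  ext a b
  simp only [tensorFin, mul_apply, of_apply, ← Finset.prod_mul_distrib, Fintype.prod_sum]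

theorem conjTranspose_tensorFin (M : Fin n → Matrix (Fin 2) (Fin 2) ℂ) :
    (tensorFin M)ᴴ = tensorFin fun i => (M i)ᴴ := by
  ext a b
  simp [tensorFin]

theorem trace_tensorFin (M : Fin n → Matrix (Fin 2) (Fin 2) ℂ) :
    (tensorFin M).trace = ∏ i, (M i).trace := by
  simp only [tensorFin, trace, diag_apply, of_apply, Fintype.prod_sum]

theorem tensorFin_sum {κ : Type*} [Fintype κ] (M : Fin n → κ → Matrix (Fin 2) (Fin 2) ℂ) :
    tensorFin (fun i => ∑ k, M i k) = ∑ f : Fin n → κ, tensorFin fun i => M i (f i) := by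
  ext a b
  simp only [tensorFin, of_apply, Matrix.sum_apply, Fintype.prod_sum]

theorem tensorFin_smul {R : Type*} [CommSemiring R] [Algebra R ℂ] (c : R)
    (M : Fin n → Matrix (Fin 2) (Fin 2) ℂ) :
    tensorFin (fun i => c • M i) = c ^ n • tensorFin M := by
  ext a b
  simp [tensorFin, Algebra.smul_def, Finset.prod_mul_distrib]

theorem tensorFin_update_apply (P : Fin n → Matrix (Fin 2) (Fin 2) ℂ) (j : Fin n)
    (A : Matrix (Fin 2) (Fin 2) ℂ) (a b : Fin n → Fin 2) :
    tensorFin (Function.update P j A) a b = A (a j) (b j) * ∏ i ∈ {j}ᶜ, P i (a i) (b i) := by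
  rw [tensorFin, of_apply, Fintype.prod_eq_mul_prod_compl j, Function.update_self]
  congr 1
  refine Finset.prod_congr rfl fun i hi => ?_
  rw [Function.update_of_ne (by simpa using hi)]

theorem tensorFin_update_smul {R : Type*} [SMul R ℂ] [IsScalarTower R ℂ ℂ]
    (P : Fin n → Matrix (Fin 2) (Fin 2) ℂ) (j : Fin n) (c : R) (A : Matrix (Fin 2) (Fin 2) ℂ) :
    tensorFin (Function.update P j (c • A)) = c • tensorFin (Function.update P j A) := by
  ext a b
  simp only [tensorFin_update_apply, Matrix.smul_apply, smul_mul_assoc]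

theorem tensorFin_update_add (P : Fin n → Matrix (Fin 2) (Fin 2) ℂ) (j : Fin n)
    (A B : Matrix (Fin 2) (Fin 2) ℂ) :
    tensorFin (Function.update P j (A + B)) =
      tensorFin (Function.update P j A) + tensorFin (Function.update P j B) := by
  ext a b
  simp [tensorFin_update_apply, add_mul]

theorem conj_singleQubit_tensorFin (U : Matrix (Fin 2) (Fin 2) ℂ) (j : Fin n)
    (P : Fin n → Matrix (Fin 2) (Fin 2) ℂ) :
    conj (singleQubit j U) (tensorFin P) = tensorFin (Function.update P j (conj U (P j))) := by
  rw [conj_apply, singleQubit, conjTranspose_tensorFin, tensorFin_mul, tensorFin_mul]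
  congr 1
  ext1 i
  obtain rfl | hi := eq_or_ne i j
  · simp [conj_apply]
  · simp [hi]

theorem tensorFin_Proj0 : (tensorFin fun _ : Fin n => Proj0) = single 0 0 1 := by
  have hProj0 : ∀ a b, Proj0 a b = if 0 = a ∧ 0 = b then 1 else 0 := by
    simp [Proj0, Fin.forall_fin_two]
  ext a b
  simp [tensorFin, hProj0, Fintype.prod_ite_zero, single_apply, funext_iff, forall_and]

end Tensor

section ControlledNot

variable {n : ℕ} {j k : Fin n}

/-- The permutation of the computational basis effected by the controlled-not gate with control
`j` and target `k`. -/
def cnot (j k : Fin n) (a : Fin n → Fin 2) : Fin n → Fin 2 :=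
  Function.update a k (a k + a j)

theorem cxMat_apply (hjk : j ≠ k) (a b : Fin n → Fin 2) :
    cxMat j k a b = if b = cnot j k a then 1 else 0 := by
  have add_swap : ∀ u v w : Fin 2, u = v + w ↔ v = u + w := by decide
  rw [cxMat, of_apply]
  refine if_congr ?_ rfl rfl
  rw [cnot, Function.eq_update_iff, add_swap]
  constructor
  · rintro ⟨hj, hk, hrest⟩
    refine ⟨hj ▸ hk, fun i hi => ?_⟩
    obtain rfl | hij := eq_or_ne i j
    exacts [hj.symm, (hrest i hij hi).symm]
  · rintro ⟨hk, hrest⟩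
    exact ⟨(hrest j hjk).symm, by rw [hk, hrest j hjk], fun i _ hi => (hrest i hi).symm⟩

theorem conj_cxMat (hjk : j ≠ k) (X : Matrix (Fin n → Fin 2) (Fin n → Fin 2) ℂ) :
    conj (cxMat j k) X = X.submatrix (cnot j k) (cnot j k) := by
  ext a b
  simp [conj_apply, mul_apply, cxMat_apply hjk, apply_ite]

theorem conj_cxMat_tensorFin {R : Type*} [SMul R ℂ] [IsScalarTower R ℂ ℂ] (hjk : j ≠ k)
    {P : Fin n → Matrix (Fin 2) (Fin 2) ℂ} {A B : Matrix (Fin 2) (Fin 2) ℂ} {c : R}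
    (h : ∀ a b a' b', P j a b * P k (a' + a) (b' + b) = c • (A a b * B a' b')) :
    conj (cxMat j k) (tensorFin P) =
      c • tensorFin (Function.update (Function.update P j A) k B) := by
  ext a b
  simp only [conj_cxMat hjk, submatrix_apply, Matrix.smul_apply, tensorFin, of_apply]
  rw [← Finset.prod_mul_prod_compl {j, k}, ← Finset.prod_mul_prod_compl {j, k},
    Finset.prod_pair hjk, Finset.prod_pair hjk, ← smul_mul_assoc]
  congr 1
  · simp [cnot, hjk, h]
  · refine Finset.prod_congr rfl fun i hi => ?_
    obtain ⟨hij, hik⟩ : i ≠ j ∧ i ≠ k := by simpa using hi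
    simp [cnot, hij, hik]

end ControlledNot

section Pauli

/-- The Pauli matrix `i^(xz) X^x Z^z` with symplectic coordinates `(x, z)`. -/
noncomputable def pauli : Bool × Bool → Matrix (Fin 2) (Fin 2) ℂ
  | (false, false) => 1
  | (false, true) => !![1, 0; 0, -1]
  | (true, false) => !![0, 1; 1, 0]
  | (true, true) => !![0, -Complex.I; Complex.I, 0]

/-- The sign `(-1)^b`, which is also the weight `W` of the literal of `r^m`. -/
noncomputable def sgn (b : Bool) : ℝ := if b then -1 else 1

theorem sgn_false : sgn false = 1 := rfl

theorem sgn_xor (a b : Bool) : sgn (xor a b) = sgn a * sgn b := by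
  cases a <;> cases b <;> simp [sgn]

theorem ofReal_sqrt_two_inv_mul_self : ((√2 : ℂ))⁻¹ * (√2 : ℂ)⁻¹ = 1 / 2 := by
  rw [← mul_inv, ← Complex.ofReal_mul, Real.mul_self_sqrt zero_le_two]
  norm_num

theorem conj_Hmat_pauli (x z : Bool) : conj Hmat (pauli (x, z)) = sgn (x && z) • pauli (z, x) := by
  have hself : (!![1, 1; 1, -1] : Matrix (Fin 2) (Fin 2) ℂ)ᴴ = !![1, 1; 1, -1] := by
    ext a b
    fin_cases a <;> fin_cases b <;> simp
  have hconj : ∀ A, conj Hmat A = (1 / 2 : ℂ) • (!![1, 1; 1, -1] * A * !![1, 1; 1, -1]) := by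
    intro A
    have hstar : star ((√2 : ℂ)⁻¹) = (√2 : ℂ)⁻¹ := by simp
    rw [conj_apply, Hmat, conjTranspose_smul, hself, hstar, Matrix.smul_mul, Matrix.smul_mul,
      Matrix.mul_smul, smul_smul, ofReal_sqrt_two_inv_mul_self]
  rw [hconj]
  cases x <;> cases z <;> ext a b <;> fin_cases a <;> fin_cases b <;>
    simp [pauli, sgn] <;> ring

theorem conj_Smat_pauli (x z : Bool) :
    conj Smat (pauli (x, z)) = sgn (x && z) • pauli (x, xor x z) := by
  cases x <;> cases z <;> ext a b <;> fin_cases a <;> fin_cases b <;>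
    simp [conj_apply, pauli, sgn, Smat, mul_apply]

theorem exp_I_mul_pi_div_four :
    Complex.exp (Complex.I * Real.pi / 4) = (√2 : ℂ)⁻¹ * (1 + Complex.I) := by
  have hcos : (√2 / 2 : ℝ) = (√2)⁻¹ := by
    field_simp
    simp
  have harg : Complex.I * Real.pi / 4 = ((Real.pi / 4 : ℝ) : ℂ) * Complex.I := by
    push_cast
    ring
  rw [harg, Complex.exp_mul_I, ← Complex.ofReal_cos, ← Complex.ofReal_sin,
    Real.cos_pi_div_four, Real.sin_pi_div_four, hcos]
  push_cast
  ring

theorem conj_Tmat_pauli_false (z : Bool) : conj Tmat (pauli (false, z)) = pauli (false, z) := by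
  simp only [conj_apply, Tmat, exp_I_mul_pi_div_four]
  cases z <;> ext a b <;> fin_cases a <;> fin_cases b <;>
    simp [pauli, mul_apply] <;>
    linear_combination 2 * ofReal_sqrt_two_inv_mul_self - ((√2 : ℂ)⁻¹) ^ 2 * Complex.I_mul_I

theorem conj_Tmat_pauli_true (z : Bool) :
    conj Tmat (pauli (true, z)) = (√2)⁻¹ • (pauli (true, true) + sgn z • pauli (true, false)) := by
  simp only [conj_apply, Tmat, exp_I_mul_pi_div_four]
  cases z <;> ext a b <;> fin_cases a <;> fin_cases b <;>
    simp [pauli, sgn, mul_apply]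
  · ring
  · ring
  · linear_combination (√2 : ℂ)⁻¹ * Complex.I_mul_I
  · linear_combination (√2 : ℂ)⁻¹ * Complex.I_mul_I

theorem pauli_mul_pauli_cnot (xj zj xk zk : Bool) (a b a' b' : Fin 2) :
    pauli (xj, zj) a b * pauli (xk, zk) (a' + a) (b' + b) =
      sgn (xj && zk && xor xk (!zj)) •
        (pauli (xj, xor zj zk) a b * pauli (xor xk xj, zk) a' b') := by
  have one_add_one : (1 : Fin 2) + 1 = 0 := rfl
  revert a b a' b'
  cases xj <;> cases zj <;> cases xk <;> cases zk <;>
    simp [Fin.forall_fin_two, pauli, sgn, one_add_one, one_fin_two]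

theorem trace_pauli (p : Bool × Bool) : (pauli p).trace = if p = (false, false) then 2 else 0 := by
  obtain ⟨_ | _, _ | _⟩ := p <;> simp [pauli, trace]

theorem trace_Proj0_mul_pauli (p : Bool × Bool) :
    (Proj0 * pauli p).trace = if p.1 = false then 1 else 0 := by
  obtain ⟨_ | _, _ | _⟩ := p <;> simp [pauli, Proj0, trace]

theorem Proj0_eq_sum_pauli : Proj0 = (2⁻¹ : ℝ) • ∑ z, pauli (false, z) := by
  ext a b
  fin_cases a <;> fin_cases b <;> simp [Proj0, pauli]
  norm_num

end Pauli

/-- A signed Pauli string `(-1)^r ⊗_j P(x_j, z_j)`, the meaning of the variables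
`x_j^t, z_j^t, r^t` of the encoding at a fixed time step `t`. -/
@[ext]
structure SignedPauli (n : ℕ) where
  letters : Fin n → Bool × Bool
  neg : Bool
  deriving Fintype, DecidableEq

namespace SignedPauli

variable {n : ℕ}

/-- The observable denoted by a signed Pauli string. -/
noncomputable def toMatrix (s : SignedPauli n) : Matrix (Fin n → Fin 2) (Fin n → Fin 2) ℂ :=
  sgn s.neg • tensorFin (pauli ∘ s.letters)

/-- Replace the `j`-th letter of a signed Pauli string by `p`, and flip the sign if `b` holds. -/
def replace (s : SignedPauli n) (j : Fin n) (p : Bool × Bool) (b : Bool) : SignedPauli n where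
  letters := Function.update s.letters j p
  neg := xor s.neg b

theorem eq_replace_iff {s s' : SignedPauli n} {j : Fin n} {p : Bool × Bool} {b : Bool} :
    s' = s.replace j p b ↔
      s'.letters j = p ∧ s'.neg = xor s.neg b ∧ ∀ i, i ≠ j → s'.letters i = s.letters i := by
  rw [SignedPauli.ext_iff, replace, Function.eq_update_iff, and_assoc, and_comm (b := s'.neg = _)]

theorem eq_replace_replace_iff {s s' : SignedPauli n} {j k : Fin n} (hjk : j ≠ k)
    {p q : Bool × Bool} {b : Bool} :
    s' = (s.replace j p b).replace k q false ↔
      s'.letters j = p ∧ s'.letters k = q ∧ s'.neg = xor s.neg b ∧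
        ∀ i, i ≠ j → i ≠ k → s'.letters i = s.letters i := by
  rw [eq_replace_iff, replace, Bool.xor_false]
  constructor
  · rintro ⟨hk, hneg, hrest⟩
    refine ⟨by simpa using hrest j hjk, hk, hneg, fun i hij hik => ?_⟩
    simpa [hij] using hrest i hik
  · rintro ⟨hj, hk, hneg, hrest⟩
    refine ⟨hk, hneg, fun i hik => ?_⟩
    obtain rfl | hij := eq_or_ne i j
    · simpa using hj
    · simpa [hij] using hrest i hij hik

theorem toMatrix_replace (s : SignedPauli n) (j : Fin n) (p : Bool × Bool) (b : Bool) :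
    (s.replace j p b).toMatrix =
      sgn s.neg • tensorFin (Function.update (pauli ∘ s.letters) j (sgn b • pauli p)) := by
  rw [toMatrix, replace, sgn_xor, Function.comp_update, tensorFin_update_smul, smul_smul]

theorem conj_singleQubit_toMatrix (s : SignedPauli n) (U : Matrix (Fin 2) (Fin 2) ℂ) (j : Fin n) :
    conj (singleQubit j U) s.toMatrix =
      sgn s.neg •
        tensorFin (Function.update (pauli ∘ s.letters) j (conj U (pauli (s.letters j)))) := by
  rw [toMatrix, map_smul, conj_singleQubit_tensorFin, Function.comp_apply]

/-- Indicator of the constraint `F_init`: the strings made of the letters `I` and `Z` only. -/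
noncomputable def initialWeight (s : SignedPauli n) : ℝ :=
  if s.neg = false ∧ ∀ j, (s.letters j).1 = false then 1 else 0

/-- The contribution of the last time step: the indicator of the constraint `F_M` times the weight
of the literal of `r^m`. -/
noncomputable def finalWeight (Qbar : Finset (Fin n)) (s : SignedPauli n) : ℝ :=
  if (∀ j, (s.letters j).1 = false) ∧ ∀ j ∉ Qbar, (s.letters j).2 = false then sgn s.neg else 0

theorem single_zero_zero_eq_sum :
    (single 0 0 1 : Matrix (Fin n → Fin 2) (Fin n → Fin 2) ℂ) =
      (2⁻¹ ^ n : ℝ) • ∑ s : SignedPauli n, s.initialWeight • s.toMatrix := by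
  rw [← tensorFin_Proj0, Proj0_eq_sum_pauli, tensorFin_smul, tensorFin_sum]
  congr 1
  refine Fintype.sum_of_injective (fun z => ⟨fun i => (false, z i), false⟩) ?_ _ _ ?_ ?_
  · intro z z' h
    simpa [funext_iff] using h
  · intro s hs
    refine smul_eq_zero_of_left (if_neg fun ⟨hneg, hx⟩ => hs ?_) _
    exact ⟨fun i => (s.letters i).2,
      SignedPauli.ext (funext fun i => Prod.ext (hx i).symm rfl) hneg.symm⟩
  · intro z
    simp [initialWeight, toMatrix, sgn, Function.comp_def]

theorem trace_measProj_mul_toMatrix (Qbar : Finset (Fin n)) (s : SignedPauli n) :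
    (measProj Qbar * s.toMatrix).trace =
      ((2 ^ (n - Qbar.card) * s.finalWeight Qbar : ℝ) : ℂ) := by
  have hfactor : ∀ j, ((if j ∈ Qbar then Proj0 else 1) * pauli (s.letters j)).trace =
      if (s.letters j).1 = false ∧ (j ∉ Qbar → (s.letters j).2 = false)
        then (if j ∈ Qbar then (1 : ℂ) else 2) else 0 := by
    intro j
    by_cases hj : j ∈ Qbar <;> simp [hj, trace_Proj0_mul_pauli, trace_pauli, Prod.ext_iff]
  have hpow : (∏ j, if j ∈ Qbar then (1 : ℂ) else 2) = 2 ^ (n - Qbar.card) := by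
    simp [Finset.prod_ite, Finset.filter_not, Finset.card_sdiff]
  simp only [measProj, toMatrix, Matrix.mul_smul, trace_smul, tensorFin_mul, trace_tensorFin,
    Function.comp_apply, hfactor, Fintype.prod_ite_zero, hpow, forall_and, finalWeight]
  split_ifs <;> simp [mul_comm]

end SignedPauli

namespace Gate

variable {n : ℕ}

/-- Whether conjugation by the gate splits the string in two: the value forced upon `u_t`. -/
def branches : Gate n → SignedPauli n → Bool
  | T j, s => (s.letters j).1
  | _, _ => false

/-- The signed Pauli strings occurring in the expansion of `G s G†`. -/
def images : Gate n → SignedPauli n → Finset (SignedPauli n)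
  | H j, s =>
    let (x, z) := s.letters j
    {s.replace j (z, x) (x && z)}
  | S j, s =>
    let (x, z) := s.letters j
    {s.replace j (x, xor x z) (x && z)}
  | T j, s =>
    let (x, z) := s.letters j
    if x then {s.replace j (true, true) false, s.replace j (true, false) z}
    else {s.replace j (false, z) false}
  | CX j k _, s =>
    let (xj, zj) := s.letters j
    let (xk, zk) := s.letters k
    {(s.replace j (xj, xor zj zk) (xj && zk && xor xk (!zj))).replace k (xor xk xj, zk) false}

/-- The common coefficient of the strings in the expansion of `G s G†`, that is, the weight of the
literal of `u_t`. -/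
noncomputable def coeff (G : Gate n) (s : SignedPauli n) : ℝ := if G.branches s then (√2)⁻¹ else 1

theorem conj_gateMatrix_toMatrix (G : Gate n) (s : SignedPauli n) :
    conj (gateMatrix G) s.toMatrix = G.coeff s • ∑ s' ∈ G.images s, s'.toMatrix := by
  cases G with
  | H j => simp [gateMatrix, images, coeff, branches, SignedPauli.conj_singleQubit_toMatrix,
      SignedPauli.toMatrix_replace, ← conj_Hmat_pauli]
  | S j => simp [gateMatrix, images, coeff, branches, SignedPauli.conj_singleQubit_toMatrix,
      SignedPauli.toMatrix_replace, ← conj_Smat_pauli]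
  | T j =>
    rcases hs : s.letters j with ⟨_ | _, z⟩
    · simp [gateMatrix, images, coeff, branches, hs, SignedPauli.conj_singleQubit_toMatrix,
        SignedPauli.toMatrix_replace, conj_Tmat_pauli_false, sgn_false]
    · have hne : s.replace j (true, true) false ≠ s.replace j (true, false) z := fun h => by
        simpa [SignedPauli.replace] using congrFun (congrArg SignedPauli.letters h) j
      simp only [gateMatrix, images, coeff, branches, hs, if_true, Finset.sum_pair hne,
        SignedPauli.conj_singleQubit_toMatrix, conj_Tmat_pauli_true, tensorFin_update_smul,
        tensorFin_update_add, SignedPauli.toMatrix_replace, sgn_false, one_smul, smul_add,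
        smul_comm (sgn s.neg) (√2)⁻¹]
  | CX j k hjk =>
    simp only [gateMatrix, images, coeff, branches, Bool.false_eq_true, if_false, one_smul,
      Finset.sum_singleton, SignedPauli.toMatrix, map_smul, SignedPauli.replace,
      Function.comp_update, sgn_xor, sgn_false, mul_smul]
    rw [conj_cxMat_tensorFin hjk (pauli_mul_pauli_cnot _ _ _ _)]

/-- The factor by which a step carrying the gate `G` contributes to the weight of the assignments
going from `s` to `s'` in that step. -/
noncomputable def transition (G : Gate n) (s s' : SignedPauli n) : ℝ :=
  if s' ∈ G.images s then G.coeff s else 0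

theorem conj_gateMatrix_toMatrix_eq_sum_transition (G : Gate n) (s : SignedPauli n) :
    conj (gateMatrix G) s.toMatrix = ∑ s', G.transition s s' • s'.toMatrix := by
  simp only [conj_gateMatrix_toMatrix, transition, ite_smul, zero_smul, Finset.sum_ite_mem,
    Finset.univ_inter, Finset.smul_sum]

end Gate

theorem conj_circuitMatrix {n m : ℕ} (gates : Fin m → Gate n) :
    conj (circuitMatrix gates) = (List.ofFn fun t => conj (gateMatrix (gates t))).reverse.prod := by
  rw [circuitMatrix, map_list_prod, List.map_reverse, List.map_ofFn]
  rfl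

theorem conj_circuitMatrix_single_zero_zero {n m : ℕ} (gates : Fin m → Gate n) :
    conj (circuitMatrix gates) (single 0 0 1) =
      (2⁻¹ ^ n : ℝ) • ∑ P : Fin (m + 1) → SignedPauli n,
        ((P 0).initialWeight * ∏ t, (gates t).transition (P t.castSucc) (P t.succ)) •
          (P (Fin.last m)).toMatrix := by
  rw [SignedPauli.single_zero_zero_eq_sum, map_smul, conj_circuitMatrix]
  exact congrArg _ (ofFn_reverse_prod_sum_smul _ _ _
    (fun t s => (gates t).conj_gateMatrix_toMatrix_eq_sum_transition s) _)

namespace Assign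

variable {n m : ℕ} {gates : Fin m → Gate n}

/-- The signed Pauli string described by an assignment at time `t`. -/
def path (α : Assign n m gates) (t : Fin (m + 1)) : SignedPauli n where
  letters j := (α.x j t, α.z j t)
  neg := α.r t

/-- The assignment following a path of signed Pauli strings, with the variables `u_t` set to the
only values that the formula allows. -/
def ofPath (gates : Fin m → Gate n) (P : Fin (m + 1) → SignedPauli n) : Assign n m gates where
  x j t := ((P t).letters j).1
  z j t := ((P t).letters j).2
  r t := (P t).neg
  u t := (gates t).branches (P t.1.castSucc)

theorem path_ofPath (P : Fin (m + 1) → SignedPauli n) : (ofPath gates P).path = P := rfl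

end Assign

section ModelCount

variable {n m : ℕ} {gates : Fin m → Gate n}

theorem FGate_iff (α : Assign n m gates) (t : Fin m) :
    FGate gates α t ↔ α.path t.succ ∈ (gates t).images (α.path t.castSucc) ∧
      ∀ h, α.u ⟨t, h⟩ = (gates t).branches (α.path t.castSucc) := by
  unfold FGate
  split
  case h_1 j h =>
    simp [h, Gate.images, SignedPauli.eq_replace_iff, Assign.path, Prod.ext_iff, isT, and_assoc]
  case h_2 j h =>
    simp [h, Gate.images, SignedPauli.eq_replace_iff, Assign.path, Prod.ext_iff, isT, and_assoc]
  case h_3 j k hjk h =>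
    simp [h, Gate.images, SignedPauli.eq_replace_replace_iff hjk, Assign.path, Prod.ext_iff, isT]
    tauto
  case h_4 j h =>
    cases hx : α.x j t.castSucc
    · simp [h, hx, Gate.images, SignedPauli.eq_replace_iff, Assign.path, Prod.ext_iff, isT,
        Gate.branches]
      tauto
    · cases hz : α.z j t.succ <;>
        simp [h, hx, hz, Gate.images, SignedPauli.eq_replace_iff, Assign.path, Prod.ext_iff, isT,
          Gate.branches, and_comm, and_left_comm]

theorem eq_ofPath_of_formula {Qbar : Finset (Fin n)} {α : Assign n m gates}
    (h : Formula gates Qbar α) : α = Assign.ofPath gates α.path := by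
  have hu : α.u = (Assign.ofPath gates α.path).u :=
    funext fun t => ((FGate_iff α t).1 (h.2.1 t)).2 t.2
  obtain ⟨x, z, r, u⟩ := α
  exact congrArg (Assign.mk x z r) hu

theorem formula_ofPath (Qbar : Finset (Fin n)) (P : Fin (m + 1) → SignedPauli n) :
    Formula gates Qbar (Assign.ofPath gates P) ↔
      ((P 0).neg = false ∧ ∀ j, ((P 0).letters j).1 = false) ∧
        (∀ t, P t.succ ∈ (gates t).images (P t.castSucc)) ∧
          (∀ j, ((P (Fin.last m)).letters j).1 = false) ∧
            ∀ j ∉ Qbar, ((P (Fin.last m)).letters j).2 = false := by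
  refine and_congr_right' (and_congr_left' (forall_congr' fun t => ?_))
  rw [FGate_iff, Assign.path_ofPath]
  exact and_iff_left fun _ => rfl

theorem weight_ofPath (P : Fin (m + 1) → SignedPauli n) :
    weight (Assign.ofPath gates P) =
      sgn (P (Fin.last m)).neg * ∏ t, (gates t).coeff (P t.castSucc) := by
  rw [weight, sgn]
  congr 1
  refine Fintype.prod_of_injective _ Subtype.val_injective _ _ ?_ fun _ => rfl
  intro t ht
  replace ht : isT (gates t) = false := by simpa using ht
  cases hG : gates t <;> simp_all [isT, Gate.coeff, Gate.branches]

theorem MC_eq_sum_paths (gates : Fin m → Gate n) (Qbar : Finset (Fin n)) :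
    MC gates Qbar = ∑ P : Fin (m + 1) → SignedPauli n,
      ((P 0).initialWeight * ∏ t, (gates t).transition (P t.castSucc) (P t.succ)) *
        (P (Fin.last m)).finalWeight Qbar := by
  refine (Fintype.sum_of_injective (Assign.ofPath gates)
    (Function.LeftInverse.injective Assign.path_ofPath) _ _ ?_ fun P => ?_).symm
  · exact fun α hα => if_neg fun h => hα ⟨α.path, (eq_ofPath_of_formula h).symm⟩
  · simp only [formula_ofPath, weight_ofPath, Gate.transition, Fintype.prod_ite_zero,
      SignedPauli.initialWeight, SignedPauli.finalWeight]
    split_ifs <;> simp_all [mul_comm]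

end ModelCount

/-- Proposition 2 (strong simulation via weighted model counting):
`2^{-q} · MC_W(F) = ⟨0|^{⊗n} C† Π C |0⟩^{⊗n}`, the probability of observing
outcome all-zeros when measuring the qubits in `Q̄` after running `C` on `|0⟩^{⊗n}`. -/
theorem strong_simulation_by_model_counting (n m : ℕ) (hn : 1 ≤ n)
    (gates : Fin m → Gate n) (Qbar : Finset (Fin n)) :
    ((((2 : ℝ) ^ Qbar.card)⁻¹ * MC gates Qbar : ℝ) : ℂ) =
      ((circuitMatrix gates)ᴴ * measProj Qbar * circuitMatrix gates)
        (fun _ => 0) (fun _ => 0) := by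
  have hpow : (2⁻¹ ^ n : ℝ) * 2 ^ (n - Qbar.card) = (2 ^ Qbar.card)⁻¹ := by
    rw [pow_sub₀ _ two_ne_zero (by simpa using Qbar.card_le_univ), ← mul_assoc, ← mul_pow]
    simp
  symm
  calc ((circuitMatrix gates)ᴴ * measProj Qbar * circuitMatrix gates) 0 0
    _ = (measProj Qbar * conj (circuitMatrix gates) (single 0 0 1)).trace :=
      conjTranspose_mul_mul_apply_self _ _ _
    _ = ((2⁻¹ ^ n * 2 ^ (n - Qbar.card) * MC gates Qbar : ℝ) : ℂ) := by
      simp only [conj_circuitMatrix_single_zero_zero, Matrix.mul_smul, trace_smul, trace_sum,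
        SignedPauli.trace_measProj_mul_toMatrix, MC_eq_sum_paths, mul_assoc,
        Complex.real_smul, ← Complex.ofReal_mul, ← Complex.ofReal_sum, Finset.mul_sum,
        mul_left_comm]
    _ = _ := by rw [hpow]

end QCMC
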